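/- arXiv:0906.1632 — 2 statements merged into one kernel-verified Lean document; each statement's English description precedes it below -/
import Mathlib

section
/- The conditional utility U_t maps L^∞_T into L^∞_t with U_t(0) = 0 a.s., and it satisfies: (i) monotonicity, i.e. U_t(X) ≥ U_t(Y) a.s. for all X, Y ∈ L^∞_T with X ≥ Y a.s.; and (ii) concavity, i.e. U_t(aX + (1−a)Y) ≥ a U_t(X) + (1−a) U_t(Y) a.s. for all X, Y ∈ L^∞_T and a ∈ (0,1). -/
open MeasureTheory Filter

variable {Ω : Type*}

/-- `X ∈ L^∞(m)`: `m`-measurable and (essentially) bounded. -/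
def MeasBdd (m : MeasurableSpace Ω) (X : Ω → ℝ) : Prop :=
  Measurable[m] X ∧ ∃ C : ℝ, ∀ ω, |X ω| ≤ C

/-- `u` is a utility function (strictly increasing, strictly concave, `C¹`) with
derivative `u'` satisfying `u 0 = 0`, `u' 0 = 1`, `u'(+∞) = 0`, `u'(-∞) = +∞`. -/
structure IsUtility (u u' : ℝ → ℝ) : Prop where
  strictMono : StrictMono u
  strictConcave : StrictConcaveOn ℝ Set.univ u
  hasDeriv : ∀ x, HasDerivAt u (u' x) x
  derivCont : Continuous u'
  zero : u 0 = 0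
  deriv_zero : u' 0 = 1
  deriv_top : Tendsto u' atTop (nhds 0)
  deriv_bot : Tendsto u' atBot atTop

/-- A diversification of `Z` at time `t`: an adapted family `(X i s)`,
`i = 1,…,n`, `s = t,…,T`, of essentially bounded random variables summing to `Z`. -/
def IsDiv {m0 : MeasurableSpace Ω} (P : Measure Ω) (ℱ : Filtration ℕ m0)
    (n t T : ℕ) (Z : Ω → ℝ) (X : ℕ → ℕ → Ω → ℝ) : Prop :=
  (∀ i ∈ Finset.Icc 1 n, ∀ s ∈ Finset.Icc t T, MeasBdd (ℱ s) (X i s)) ∧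
  ∀ᵐ ω ∂P, (∑ i ∈ Finset.Icc 1 n, ∑ s ∈ Finset.Icc t T, X i s ω) = Z ω

/-- The total conditional expected utility `∑_{i,s} E[u_{i,s}(X_{i,s}) | 𝓕_t]`. -/
noncomputable def utilSum {m0 : MeasurableSpace Ω} (P : Measure Ω) (ℱ : Filtration ℕ m0)
    (u : ℕ → ℕ → ℝ → ℝ) (n t T : ℕ) (X : ℕ → ℕ → Ω → ℝ) : Ω → ℝ :=
  fun ω => ∑ i ∈ Finset.Icc 1 n, ∑ s ∈ Finset.Icc t T,
    (P[fun ω' => u i s (X i s ω') | ℱ t]) ω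

/-- `g` is an essential supremum of the family `S` of random variables under `P`. -/
def IsEssSupOf {m0 : MeasurableSpace Ω} (P : Measure Ω) (S : Set (Ω → ℝ)) (g : Ω → ℝ) : Prop :=
  (∀ f ∈ S, f ≤ᵐ[P] g) ∧ ∀ h : Ω → ℝ, (∀ f ∈ S, f ≤ᵐ[P] h) → g ≤ᵐ[P] h

lemma MeasBdd.mono' {m m' : MeasurableSpace Ω} (h : m ≤ m') {X : Ω → ℝ} (hX : MeasBdd m X) :
    MeasBdd m' X := ⟨hX.1.mono h le_rfl, hX.2⟩

lemma MeasBdd.integrable' {m m0 : MeasurableSpace Ω} (h : m ≤ m0) {P : Measure Ω}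
    [IsProbabilityMeasure P] {X : Ω → ℝ} (hX : MeasBdd m X) : Integrable X P := by
  obtain ⟨hm, C, hC⟩ := hX
  exact Integrable.of_bound (hm.mono h le_rfl).aestronglyMeasurable C
    (Eventually.of_forall fun ω => by simpa using hC ω)

lemma MeasBdd.comp_cont {m : MeasurableSpace Ω} {X : Ω → ℝ} (hX : MeasBdd m X) {f : ℝ → ℝ}
    (hf : Continuous f) : MeasBdd m (fun ω => f (X ω)) := by
  obtain ⟨hm, C, hC⟩ := hX
  refine ⟨hf.measurable.comp hm, ?_⟩
  obtain ⟨D, hD⟩ := (isCompact_Icc (a := -C) (b := C)).exists_bound_of_continuousOn hf.continuousOn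
  exact ⟨D, fun ω => by simpa using hD (X ω) (abs_le.mp (hC ω))⟩

lemma MeasBdd.add' {m : MeasurableSpace Ω} {X Y : Ω → ℝ} (hX : MeasBdd m X) (hY : MeasBdd m Y) :
    MeasBdd m (fun ω => X ω + Y ω) := by
  obtain ⟨hm, C, hC⟩ := hX
  obtain ⟨hm', C', hC'⟩ := hY
  exact ⟨hm.add hm', C + C', fun ω => (abs_add_le _ _).trans (add_le_add (hC ω) (hC' ω))⟩

lemma MeasBdd.const_mul' {m : MeasurableSpace Ω} {X : Ω → ℝ} (hX : MeasBdd m X) (a : ℝ) :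
    MeasBdd m (fun ω => a * X ω) := hX.comp_cont (f := fun x => a * x) (by fun_prop)

lemma measBdd_const (m : MeasurableSpace Ω) (c : ℝ) : MeasBdd m (fun _ : Ω => c) :=
  ⟨measurable_const, |c|, fun _ => le_rfl⟩

lemma IsUtility.cont {u u' : ℝ → ℝ} (h : IsUtility u u') : Continuous u :=
  continuous_iff_continuousAt.2 fun x => (h.hasDeriv x).continuousAt

lemma IsUtility.le_self {u u' : ℝ → ℝ} (h : IsUtility u u') (x : ℝ) : u x ≤ x := by
  have hc := h.strictConcave.concaveOn
  have hd := h.hasDeriv 0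
  rw [h.deriv_zero] at hd
  rcases lt_trichotomy x 0 with hx | hx | hx
  · have := hc.le_slope_of_hasDerivAt (Set.mem_univ x) (Set.mem_univ 0) hx hd
    rw [slope_def_field, h.zero, le_div_iff₀ (by linarith)] at this
    linarith
  · rw [hx, h.zero]
  · have := hc.slope_le_of_hasDerivAt (Set.mem_univ 0) (Set.mem_univ x) hx hd
    rw [slope_def_field, h.zero, div_le_iff₀ (by linarith)] at this
    linarith

/-- An essential supremum of measurable functions which is bounded is a.e. measurable. -/
lemma essSup_meas {m m0 : MeasurableSpace Ω} (hm : m ≤ m0) (P : Measure Ω)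
    [IsProbabilityMeasure P] (S : Set (Ω → ℝ)) (g : Ω → ℝ) (hg : IsEssSupOf P S g)
    (hS : ∀ f ∈ S, Measurable[m] f) (C : ℝ) (hC : ∀ᵐ ω ∂P, |g ω| ≤ C) :
    ∃ V : Ω → ℝ, MeasBdd m V ∧ g =ᵐ[P] V := by
  have hC0 : 0 ≤ C := by
    obtain ⟨ω, hω⟩ := hC.exists
    exact (abs_nonneg _).trans hω
  let G : Set (Ω → ℝ) := {V | Measurable[m] V ∧ (∀ ω, |V ω| ≤ C) ∧ V ≤ᵐ[P] g}
  let I : Set ℝ := (fun V => ∫ ω, V ω ∂P) '' G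
  have hGint : ∀ V ∈ G, Integrable V P := fun V hV =>
    MeasBdd.integrable' hm ⟨hV.1, C, hV.2.1⟩
  have hG0 : (fun _ => -C) ∈ G := by
    refine ⟨measurable_const, fun ω => by rw [abs_neg, abs_of_nonneg hC0], ?_⟩
    filter_upwards [hC] with ω hω using (abs_le.1 hω).1
  have hIne : I.Nonempty := ⟨_, _, hG0, rfl⟩
  have hIbdd : BddAbove I := by
    refine ⟨C, ?_⟩
    rintro _ ⟨V, hV, rfl⟩
    have := integral_mono (hGint V hV) (integrable_const C) (fun ω => (abs_le.1 (hV.2.1 ω)).2)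
    simpa using this
  obtain ⟨x, -, hx, hxI⟩ := exists_seq_tendsto_sSup hIne hIbdd
  choose W hWG hWx using hxI
  have hbdd : ∀ ω, BddAbove (Set.range fun k => W k ω) := fun ω =>
    ⟨C, by rintro _ ⟨k, rfl⟩; exact (abs_le.1 ((hWG k).2.1 ω)).2⟩
  let V : Ω → ℝ := fun ω => ⨆ k, W k ω
  have hVG : V ∈ G := by
    refine ⟨Measurable.iSup fun k => (hWG k).1, fun ω => abs_le.2 ⟨?_, ?_⟩, ?_⟩
    · exact (abs_le.1 ((hWG 0).2.1 ω)).1.trans (le_ciSup (hbdd ω) 0)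
    · exact ciSup_le fun k => (abs_le.1 ((hWG k).2.1 ω)).2
    · have := ae_all_iff.2 fun k => (hWG k).2.2
      filter_upwards [this] with ω hω using ciSup_le hω
  have hmax : sSup I ≤ ∫ ω, V ω ∂P := by
    refine le_of_tendsto' hx fun k => ?_
    rw [← hWx k]
    exact integral_mono (hGint _ (hWG k)) (hGint _ hVG) fun ω => le_ciSup (hbdd ω) k
  refine ⟨V, ⟨hVG.1, C, hVG.2.1⟩, ?_⟩
  have hle : g ≤ᵐ[P] V := by
    refine hg.2 V fun f hf => ?_
    let F : Ω → ℝ := fun ω => max (V ω) (min (f ω) C)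
    have hFG : F ∈ G := by
      refine ⟨hVG.1.max ((hS f hf).min measurable_const), fun ω => abs_le.2 ⟨?_, ?_⟩, ?_⟩
      · exact (abs_le.1 (hVG.2.1 ω)).1.trans (le_max_left _ _)
      · exact max_le (abs_le.1 (hVG.2.1 ω)).2 (min_le_right _ _)
      · filter_upwards [hVG.2.2, hg.1 f hf] with ω h1 h2
        exact max_le h1 ((min_le_left _ _).trans h2)
    have hVF : V ≤ F := fun ω => le_max_left _ _
    have hI : ∫ ω, F ω ∂P ≤ ∫ ω, V ω ∂P := (le_csSup hIbdd ⟨F, hFG, rfl⟩).trans hmax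
    have heq : ∫ ω, V ω ∂P = ∫ ω, F ω ∂P :=
      le_antisymm (integral_mono (hGint _ hVG) (hGint _ hFG) hVF) hI
    have hae := (integral_eq_iff_of_ae_le (hGint _ hVG) (hGint _ hFG)
      (Eventually.of_forall hVF)).1 heq
    filter_upwards [hae, hg.1 f hf, hC] with ω h1 h2 h3
    have h4 : min (f ω) C ≤ V ω := by rw [h1]; exact le_max_right _ _
    rwa [min_eq_left (h2.trans (abs_le.1 h3).2)] at h4
  filter_upwards [hle, hVG.2.2] with ω h1 h2 using le_antisymm h1 h2

section aux
variable {m0 : MeasurableSpace Ω} {P : Measure Ω} [IsProbabilityMeasure P]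
  {ℱ : Filtration ℕ m0} {T n t : ℕ} {u u' : ℕ → ℕ → ℝ → ℝ}

lemma utilSum_meas (X : ℕ → ℕ → Ω → ℝ) : Measurable[ℱ t] (utilSum P ℱ u n t T X) := by
  unfold utilSum
  refine Finset.measurable_fun_sum _ fun i _ => Finset.measurable_fun_sum _ fun s _ => ?_
  exact stronglyMeasurable_condExp.measurable

lemma double_ae_le {f g : ℕ → ℕ → Ω → ℝ}
    (h : ∀ i ∈ Finset.Icc 1 n, ∀ s ∈ Finset.Icc t T, f i s ≤ᵐ[P] g i s) :
    (fun ω => ∑ i ∈ Finset.Icc 1 n, ∑ s ∈ Finset.Icc t T, f i s ω) ≤ᵐ[P]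
    (fun ω => ∑ i ∈ Finset.Icc 1 n, ∑ s ∈ Finset.Icc t T, g i s ω) := by
  have : ∀ᵐ ω ∂P, ∀ i ∈ Finset.Icc 1 n, ∀ s ∈ Finset.Icc t T, f i s ω ≤ g i s ω := by
    rw [ae_all_iff]; intro i
    rw [ae_all_iff]; intro hi
    rw [ae_all_iff]; intro s
    rw [ae_all_iff]; intro hs
    exact h i hi s hs
  filter_upwards [this] with ω hω
  exact Finset.sum_le_sum fun i hi => Finset.sum_le_sum fun s hs => hω i hi s hs

lemma util_int (hu : ∀ i s, IsUtility (u i s) (u' i s)) {i s : ℕ} {X : Ω → ℝ}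
    (hX : MeasBdd (ℱ s) X) : Integrable (fun ω => u i s (X ω)) P :=
  (hX.comp_cont (hu i s).cont).integrable' (ℱ.le s)

lemma utilSum_mono (hu : ∀ i s, IsUtility (u i s) (u' i s)) {X Y : ℕ → ℕ → Ω → ℝ}
    (hX : ∀ i ∈ Finset.Icc 1 n, ∀ s ∈ Finset.Icc t T, MeasBdd (ℱ s) (X i s))
    (hY : ∀ i ∈ Finset.Icc 1 n, ∀ s ∈ Finset.Icc t T, MeasBdd (ℱ s) (Y i s))
    (h : ∀ i s, Y i s ≤ᵐ[P] X i s) :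
    utilSum P ℱ u n t T Y ≤ᵐ[P] utilSum P ℱ u n t T X := by
  refine double_ae_le fun i hi s hs => condExp_mono (util_int hu (hY i hi s hs))
    (util_int hu (hX i hi s hs)) ?_
  filter_upwards [h i s] with ω hω using (hu i s).strictMono.monotone hω

lemma utilSum_concave (hu : ∀ i s, IsUtility (u i s) (u' i s)) {X Y : ℕ → ℕ → Ω → ℝ} {a : ℝ}
    (ha : 0 < a) (ha1 : a < 1)
    (hX : ∀ i ∈ Finset.Icc 1 n, ∀ s ∈ Finset.Icc t T, MeasBdd (ℱ s) (X i s))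
    (hY : ∀ i ∈ Finset.Icc 1 n, ∀ s ∈ Finset.Icc t T, MeasBdd (ℱ s) (Y i s)) :
    (fun ω => a * utilSum P ℱ u n t T X ω + (1 - a) * utilSum P ℱ u n t T Y ω) ≤ᵐ[P]
      utilSum P ℱ u n t T (fun i s ω => a * X i s ω + (1 - a) * Y i s ω) := by
  have := double_ae_le (P := P) (n := n) (t := t) (T := T)
    (f := fun i s ω => a * (P[fun ω' => u i s (X i s ω') | ℱ t]) ω
      + (1 - a) * (P[fun ω' => u i s (Y i s ω') | ℱ t]) ω)
    (g := fun i s => P[fun ω' => u i s (a * X i s ω' + (1 - a) * Y i s ω') | ℱ t]) ?_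
  · filter_upwards [this] with ω hω
    simpa only [utilSum, Finset.mul_sum, ← Finset.sum_add_distrib] using hω
  · intro i hi s hs
    have iX := util_int (P := P) (i := i) hu (hX i hi s hs)
    have iY := util_int (P := P) (i := i) hu (hY i hi s hs)
    have h1 := condExp_add (m := ℱ t) (iX.smul a) (iY.smul (1 - a))
    have h2 := condExp_smul (μ := P) a (fun ω' => u i s (X i s ω')) (ℱ t)
    have h3 := condExp_smul (μ := P) (1 - a) (fun ω' => u i s (Y i s ω')) (ℱ t)
    have h4 : P[a • (fun ω' => u i s (X i s ω')) + (1 - a) • (fun ω' => u i s (Y i s ω')) | ℱ t]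
        ≤ᵐ[P] P[fun ω' => u i s (a * X i s ω' + (1 - a) * Y i s ω') | ℱ t] := by
      refine condExp_mono ((iX.smul a).add (iY.smul (1 - a)))
        (util_int hu (((hX i hi s hs).const_mul' a).add' ((hY i hi s hs).const_mul' (1 - a))))
        (Eventually.of_forall fun ω => ?_)
      have := (hu i s).strictConcave.concaveOn.2 (Set.mem_univ (X i s ω)) (Set.mem_univ (Y i s ω))
        ha.le (sub_nonneg.2 ha1.le) (by ring)
      simpa using this
    filter_upwards [h1, h2, h3, h4] with ω e1 e2 e3 e4
    simp only [Pi.add_apply, Pi.smul_apply, smul_eq_mul] at e1 e2 e3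
    linarith

lemma utilSum_le (hu : ∀ i s, IsUtility (u i s) (u' i s)) {X : ℕ → ℕ → Ω → ℝ} {Z : Ω → ℝ} {C : ℝ}
    (hX : IsDiv P ℱ n t T Z X) (hC : ∀ ω, Z ω ≤ C) :
    utilSum P ℱ u n t T X ≤ᵐ[P] fun _ => C := by
  have h1 : utilSum P ℱ u n t T X ≤ᵐ[P] _ :=
    double_ae_le (P := P) (n := n) (t := t) (T := T)
    (f := fun i s => P[fun ω' => u i s (X i s ω') | ℱ t])
    (g := fun i s => P[X i s | ℱ t]) fun i hi s hs =>
      condExp_mono (util_int hu (hX.1 i hi s hs)) ((hX.1 i hi s hs).integrable' (ℱ.le s))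
      (Eventually.of_forall fun ω => (hu i s).le_self _)
  have hint : ∀ i ∈ Finset.Icc 1 n, ∀ s ∈ Finset.Icc t T, Integrable (X i s) P :=
    fun i hi s hs => (hX.1 i hi s hs).integrable' (ℱ.le s)
  have hin : ∀ p ∈ Finset.Icc 1 n ×ˢ Finset.Icc t T, Integrable (X p.1 p.2) P := fun p hp =>
    hint _ (Finset.mem_product.1 hp).1 _ (Finset.mem_product.1 hp).2
  have h2 := condExp_finsetSum hin (ℱ t)
  have h3 : P[∑ p ∈ Finset.Icc 1 n ×ˢ Finset.Icc t T, X p.1 p.2 | ℱ t] ≤ᵐ[P]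
      P[fun _ => C | ℱ t] := by
    refine condExp_mono (integrable_finsetSum' _ hin) (integrable_const C) ?_
    filter_upwards [hX.2] with ω hω
    rw [Finset.sum_apply, Finset.sum_product, hω]
    exact hC ω
  rw [condExp_const (ℱ.le t)] at h3
  filter_upwards [h1, h2, h3] with ω e1 e2 e3
  rw [e2, Finset.sum_apply, Finset.sum_product] at e3
  exact e1.trans e3

/-- put all of `Z` at `(1,T)` -/
def single (T : ℕ) (Z : Ω → ℝ) : ℕ → ℕ → Ω → ℝ :=
  fun i s ω => if i = 1 ∧ s = T then Z ω else 0

lemma single_bdd {Z : Ω → ℝ} (hZ : MeasBdd (ℱ T) Z) (i s : ℕ) :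
    MeasBdd (ℱ s) (single T Z i s) := by
  unfold single
  by_cases h : i = 1 ∧ s = T
  · obtain ⟨rfl, rfl⟩ := h
    simpa using hZ
  · simpa [h] using measBdd_const (ℱ s) 0

lemma single_sum (hn : 0 < n) (ht : t ≤ T) (Z : Ω → ℝ) (ω : Ω) :
    ∑ i ∈ Finset.Icc 1 n, ∑ s ∈ Finset.Icc t T, single T Z i s ω = Z ω := by
  rw [Finset.sum_eq_single_of_mem 1 (by simp; omega), Finset.sum_eq_single_of_mem T (by simpa)]
  · simp [single]
  · intro s _ hs; simp [single, hs]
  · intro i _ hi; simp [single, hi]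

lemma isDiv_single (hn : 0 < n) (ht : t ≤ T) {Z : Ω → ℝ} (hZ : MeasBdd (ℱ T) Z) :
    IsDiv P ℱ n t T Z (single T Z) :=
  ⟨fun i _ s _ => single_bdd hZ i s, Eventually.of_forall (single_sum hn ht Z)⟩

lemma utilSum_single_ge (hn : 0 < n) (ht : t ≤ T) (hu : ∀ i s, IsUtility (u i s) (u' i s))
    {Z : Ω → ℝ} (hZ : MeasBdd (ℱ T) Z) {c : ℝ} (hc : ∀ ω, c ≤ Z ω) :
    (fun _ => u 1 T c) ≤ᵐ[P] utilSum P ℱ u n t T (single T Z) := by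
  have h := utilSum_mono (P := P) (n := n) (t := t) (T := T) (X := single T Z)
    (Y := single T (fun _ : Ω => c)) hu
    (fun i _ s _ => single_bdd hZ i s) (fun i _ s _ => single_bdd (measBdd_const _ c) i s)
    (fun i s => Eventually.of_forall fun ω => by
      unfold single; split_ifs; exacts [hc ω, le_rfl])
  refine EventuallyLE.trans (Eventually.of_forall fun ω => le_of_eq ?_) h
  rw [← single_sum hn ht (fun _ : Ω => u 1 T c) ω]
  unfold utilSum single
  refine Finset.sum_congr rfl fun i _ => Finset.sum_congr rfl fun s _ => ?_
  rw [condExp_const (ℱ.le t)]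
  split_ifs with h
  · rw [h.1, h.2]
  · exact (hu i s).zero.symm

end aux

/-- Proposition 2.4: the conditional utility `U_t` maps `L^∞_T` into
`L^∞_t`, vanishes at `0`, and is monotone and concave. -/
theorem conditional_utility_properties
    {m0 : MeasurableSpace Ω} (P : Measure Ω) [IsProbabilityMeasure P]
    (ℱ : Filtration ℕ m0) (T n t : ℕ) (hT : 0 < T) (hn : 0 < n) (ht : t ≤ T)
    (u u' : ℕ → ℕ → ℝ → ℝ) (hu : ∀ i s, IsUtility (u i s) (u' i s))
    (U : (Ω → ℝ) → Ω → ℝ)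
    -- `U Z` is the essential supremum over all diversifications of `Z` of the
    -- total conditional expected utility:
    (hU : ∀ Z : Ω → ℝ, MeasBdd (ℱ T) Z →
      IsEssSupOf P
        {g | ∃ X : ℕ → ℕ → Ω → ℝ, IsDiv P ℱ n t T Z X ∧ g = utilSum P ℱ u n t T X}
        (U Z)) :
    -- `U` maps `L^∞_T` into `L^∞_t`:
    (∀ Z : Ω → ℝ, MeasBdd (ℱ T) Z → ∃ V : Ω → ℝ, MeasBdd (ℱ t) V ∧ U Z =ᵐ[P] V) ∧
    -- `U_t(0) = 0` a.s.:
    (U (fun _ => 0) =ᵐ[P] fun _ => 0) ∧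
    -- monotonicity:
    (∀ X Y : Ω → ℝ, MeasBdd (ℱ T) X → MeasBdd (ℱ T) Y → Y ≤ᵐ[P] X →
      U Y ≤ᵐ[P] U X) ∧
    -- concavity:
    (∀ X Y : Ω → ℝ, ∀ a : ℝ, MeasBdd (ℱ T) X → MeasBdd (ℱ T) Y → 0 < a → a < 1 →
      (fun ω => a * U X ω + (1 - a) * U Y ω) ≤ᵐ[P]
        U (fun ω => a * X ω + (1 - a) * Y ω)) := by
  have hub : ∀ Z : Ω → ℝ, MeasBdd (ℱ T) Z → ∀ C : ℝ, (∀ ω, Z ω ≤ C) → U Z ≤ᵐ[P] fun _ => C := by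
    intro Z hZ C hC
    refine (hU Z hZ).2 _ ?_
    rintro f ⟨X, hX, rfl⟩
    exact utilSum_le hu hX hC
  have hlb : ∀ Z : Ω → ℝ, MeasBdd (ℱ T) Z → ∀ c : ℝ, (∀ ω, c ≤ Z ω) →
      (fun _ => u 1 T c) ≤ᵐ[P] U Z := by
    intro Z hZ c hc
    exact (utilSum_single_ge hn ht hu hZ hc).trans
      ((hU Z hZ).1 _ ⟨_, isDiv_single hn ht hZ, rfl⟩)
  refine ⟨?_, ?_, ?_, ?_⟩
  · intro Z hZ
    obtain ⟨C, hC⟩ := hZ.2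
    refine essSup_meas (ℱ.le t) P _ (U Z) (hU Z hZ) ?_ (max |C| |u 1 T (-C)|) ?_
    · rintro f ⟨X, -, rfl⟩
      exact utilSum_meas X
    · filter_upwards [hub Z hZ C fun ω => (abs_le.1 (hC ω)).2,
        hlb Z hZ (-C) fun ω => (abs_le.1 (hC ω)).1] with ω h1 h2
      refine abs_le.2 ⟨?_, ?_⟩
      · have := le_max_right |C| |u 1 T (-C)|
        have := neg_abs_le (u 1 T (-C))
        linarith
      · exact h1.trans ((le_abs_self C).trans (le_max_left _ _))
  · have hz := measBdd_const (ℱ T) (0 : ℝ)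
    filter_upwards [hub _ hz 0 fun _ => le_rfl, hlb _ hz 0 fun _ => le_rfl] with ω h1 h2
    rw [(hu 1 T).zero] at h2
    exact le_antisymm h1 h2
  · intro X Y hX hY hXY
    refine (hU Y hY).2 _ ?_
    rintro f ⟨D, hD, rfl⟩
    have hW : MeasBdd (ℱ T) (fun ω => X ω + (-1) * Y ω) := hX.add' (hY.const_mul' (-1))
    let E : ℕ → ℕ → Ω → ℝ := fun i s ω => D i s ω + single T (fun ω => X ω + (-1) * Y ω) i s ω
    have hE : ∀ i ∈ Finset.Icc 1 n, ∀ s ∈ Finset.Icc t T, MeasBdd (ℱ s) (E i s) :=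
      fun i hi s hs => (hD.1 i hi s hs).add' (single_bdd hW i s)
    have hEd : IsDiv P ℱ n t T X E := by
      refine ⟨hE, ?_⟩
      filter_upwards [hD.2] with ω hω
      simp only [E, Finset.sum_add_distrib]
      rw [hω, single_sum hn ht]
      ring
    refine (utilSum_mono hu hE hD.1 fun i s => ?_).trans ((hU X hX).1 _ ⟨E, hEd, rfl⟩)
    filter_upwards [hXY] with ω hω
    simp only [E, single]
    split_ifs <;> linarith
  · intro X Y a hX hY ha ha1
    have hW := (hX.const_mul' a).add' (hY.const_mul' (1 - a))
    have hb : 0 < 1 - a := sub_pos.2 ha1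
    set W : Ω → ℝ := fun ω => a * X ω + (1 - a) * Y ω with hWdef
    have key : U Y ≤ᵐ[P] fun ω => (U W ω - a * U X ω) / (1 - a) := by
      refine (hU Y hY).2 _ ?_
      rintro g ⟨E, hE, rfl⟩
      have : U X ≤ᵐ[P] fun ω => (U W ω - (1 - a) * utilSum P ℱ u n t T E ω) / a := by
        refine (hU X hX).2 _ ?_
        rintro f ⟨D, hD, rfl⟩
        have hdiv : IsDiv P ℱ n t T W (fun i s ω => a * D i s ω + (1 - a) * E i s ω) := by
          refine ⟨fun i hi s hs => ((hD.1 i hi s hs).const_mul' a).add'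
            ((hE.1 i hi s hs).const_mul' (1 - a)), ?_⟩
          filter_upwards [hD.2, hE.2] with ω h1 h2
          simp only [Finset.sum_add_distrib, ← Finset.mul_sum]
          rw [h1, h2]
        filter_upwards [utilSum_concave (P := P) hu ha ha1 hD.1 hE.1,
          (hU W hW).1 _ ⟨_, hdiv, rfl⟩] with ω h1 h2
        rw [le_div_iff₀ ha]
        linarith
      filter_upwards [this] with ω h1
      rw [le_div_iff₀ ha] at h1
      rw [le_div_iff₀ hb]
      linarith
    filter_upwards [key] with ω h1
    rw [le_div_iff₀ hb] at h1
    linarith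
end

section
/- For each s, the sup-convolution u_s^{(n)} : ℝ → ℝ is again a strictly increasing, strictly concave C^1 function satisfying u_s^{(n)}(0) = 0, (u_s^{(n)})'(0) = 1, lim_{x→+∞} (u_s^{(n)})'(x) = 0 and lim_{x→−∞} (u_s^{(n)})'(x) = +∞. Moreover, if I_{i,s} denotes the inverse function of u_{i,s}', then for all x ∈ ℝ: u_s^{(n)}(x) = Σ_{i=1}^n u_{i,s}( I_{i,s}( (Σ_{j=1}^n I_{j,s})^{-1}(x) ) ), where (Σ_{j=1}^n I_{j,s})^{-1} is the inverse of the function y ↦ Σ_{j=1}^n I_{j,s}(y). -/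
open Filter

/-- The sup-convolution `u^{(n)}(x) = sup { Σ_{i=1}^n u_i(x_i) : Σ_{i=1}^n x_i = x }`. -/
noncomputable def supConv (u : ℕ → ℝ → ℝ) (n : ℕ) (x : ℝ) : ℝ :=
  sSup {y | ∃ xs : ℕ → ℝ, (∑ i ∈ Finset.Icc 1 n, xs i) = x ∧
    y = ∑ i ∈ Finset.Icc 1 n, u i (xs i)}

theorem IsUtility.tangent {u u' : ℝ → ℝ} (h : IsUtility u u') (a b : ℝ) :
    u b ≤ u a + u' a * (b - a) := by
  have hc := h.strictConcave.concaveOn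
  rcases lt_trichotomy a b with hab | hab | hab
  · have := hc.slope_le_of_hasDerivAt (Set.mem_univ a) (Set.mem_univ b) hab (h.hasDeriv a)
    rw [slope_def_field, div_le_iff₀ (by linarith)] at this
    linarith
  · subst hab; simp
  · have := hc.le_slope_of_hasDerivAt (Set.mem_univ b) (Set.mem_univ a) hab (h.hasDeriv a)
    rw [slope_def_field, le_div_iff₀ (by linarith)] at this
    linarith

theorem IsUtility.anti {u u' : ℝ → ℝ} (h : IsUtility u u') : Antitone u' := by
  intro a b hab
  rcases hab.eq_or_lt with rfl | hab
  · exact le_rfl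
  · have h1 := h.tangent a b
    have h2 := h.tangent b a
    by_contra hlt
    push Not at hlt
    nlinarith

/-- Proposition 2.16: the sup-convolution of utility functions is again a
utility function, and it is given explicitly by
`u^{(n)}(x) = Σ_i u_i(I_i((Σ_j I_j)⁻¹(x)))`, where `I_i = (u_i')⁻¹`. -/
theorem supConv_isUtility_and_formula
    (n : ℕ) (hn : 0 < n)
    (u u' : ℕ → ℝ → ℝ) (hu : ∀ i ∈ Finset.Icc 1 n, IsUtility (u i) (u' i))
    -- `I i` is the inverse function of `u' i`:
    (I : ℕ → ℝ → ℝ)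
    (hI : ∀ i ∈ Finset.Icc 1 n,
      (∀ x : ℝ, I i (u' i x) = x) ∧ ∀ y : ℝ, 0 < y → u' i (I i y) = y)
    -- `J` is the inverse function of `y ↦ Σ_{j=1}^n I j y`:
    (J : ℝ → ℝ)
    (hJ : ∀ x : ℝ, 0 < J x ∧ (∑ j ∈ Finset.Icc 1 n, I j (J x)) = x) :
    -- the sup-convolution is again a utility function …
    (∃ D : ℝ → ℝ, IsUtility (supConv u n) D) ∧
    -- … and the explicit formula holds:
    ∀ x : ℝ, supConv u n x = ∑ i ∈ Finset.Icc 1 n, u i (I i (J x)) := by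
  set S := Finset.Icc 1 n with hS
  have hne : S.Nonempty := ⟨1, by simp [hS]; omega⟩
  have hIanti : ∀ i ∈ S, ∀ p q : ℝ, 0 < p → p < q → I i q < I i p := by
    intro i hi p q hp hpq
    by_contra hlt
    push Not at hlt
    have := (hu i hi).anti hlt
    rw [(hI i hi).2 p hp, (hI i hi).2 q (hp.trans hpq)] at this
    linarith
  have hsum : ∀ p q : ℝ, 0 < p → p < q → ∑ i ∈ S, I i q < ∑ i ∈ S, I i p :=
    fun p q hp hpq => Finset.sum_lt_sum_of_nonempty hne fun i hi => hIanti i hi p q hp hpq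
  have hJanti : StrictAnti J := by
    intro x y hxy
    by_contra hlt
    push Not at hlt
    rcases hlt.eq_or_lt with h | h
    · have h1 := (hJ x).2
      rw [h, (hJ y).2] at h1
      linarith
    · have := hsum _ _ (hJ x).1 h
      rw [(hJ x).2, (hJ y).2] at this
      linarith
  have hJsurj : ∀ y : ℝ, 0 < y → J (∑ i ∈ S, I i y) = y := by
    intro y hy
    have h := hJ (∑ i ∈ S, I i y)
    rcases lt_trichotomy (J (∑ i ∈ S, I i y)) y with h1 | h1 | h1
    · have := hsum _ _ h.1 h1
      linarith [h.2]
    · exact h1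
    · have := hsum _ _ hy h1
      linarith [h.2]
  have hkey : ∀ (x : ℝ) (xs : ℕ → ℝ), ∑ i ∈ S, u i (xs i) ≤
      ∑ i ∈ S, u i (I i (J x)) + J x * (∑ i ∈ S, xs i - x) := by
    intro x xs
    have h1 : ∑ i ∈ S, u i (xs i) ≤
        ∑ i ∈ S, (u i (I i (J x)) + J x * (xs i - I i (J x))) := by
      refine Finset.sum_le_sum fun i hi => ?_
      have := (hu i hi).tangent (I i (J x)) (xs i)
      rwa [(hI i hi).2 _ (hJ x).1] at this
    rwa [Finset.sum_add_distrib, ← Finset.mul_sum, Finset.sum_sub_distrib, (hJ x).2] at h1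
  have hform : ∀ x : ℝ, supConv u n x = ∑ i ∈ S, u i (I i (J x)) := by
    intro x
    refine IsGreatest.csSup_eq ⟨⟨fun i => I i (J x), (hJ x).2, rfl⟩, ?_⟩
    rintro y ⟨xs, hxs, rfl⟩
    have := hkey x xs
    rw [hxs] at this
    simpa using this
  have htan : ∀ x y : ℝ, supConv u n y ≤ supConv u n x + J x * (y - x) := by
    intro x y
    have := hkey x (fun i => I i (J y))
    rw [(hJ y).2] at this
    rwa [hform, hform]
  have hcont : Continuous J := by
    rw [continuous_iff_continuousAt]
    intro a
    have hneg : ContinuousAt (fun x => - J x) a := by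
      refine continuousAt_of_monotoneOn_of_image_mem_nhds (s := Set.univ) ?_ univ_mem ?_
      · intro x _ y _ hxy
        exact neg_le_neg (hJanti.antitone hxy)
      · refine mem_of_superset (Iio_mem_nhds (neg_lt_zero.mpr (hJ a).1)) ?_
        intro y hy
        refine ⟨∑ i ∈ S, I i (-y), trivial, ?_⟩
        have hy' : 0 < -y := neg_pos.mpr hy
        simp [hJsurj _ hy']
    have h2 : ContinuousAt (fun x => - (- J x)) a := hneg.neg
    simp only [neg_neg] at h2
    exact h2
  have hder : ∀ x, HasDerivAt (supConv u n) (J x) x := by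
    intro x
    rw [hasDerivAt_iff_isLittleO, Asymptotics.isLittleO_iff]
    intro c hc
    have h0 : ∀ᶠ y in nhds x, |J y - J x| < c := by
      have := Metric.tendsto_nhds.mp (hcont.tendsto x) c hc
      simpa [Real.dist_eq] using this
    filter_upwards [h0] with y hy
    have h1 := htan x y
    have h2 := htan y x
    simp only [Real.norm_eq_abs, smul_eq_mul]
    have h3 : |supConv u n y - supConv u n x - (y - x) * J x| ≤ |(J y - J x) * (y - x)| := by
      have h4 := neg_abs_le ((J y - J x) * (y - x))
      have h5 := abs_nonneg ((J y - J x) * (y - x))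
      rw [abs_le]
      constructor <;> nlinarith
    rw [abs_mul] at h3
    exact h3.trans (mul_le_mul_of_nonneg_right hy.le (abs_nonneg _))
  have hI1 : ∀ i ∈ S, I i 1 = 0 := by
    intro i hi
    rw [← (hu i hi).deriv_zero, (hI i hi).1]
  have hJ0 : J 0 = 1 := by
    have := hJsurj 1 one_pos
    rwa [Finset.sum_eq_zero hI1] at this
  refine ⟨⟨J, ?_, ?_, hder, hcont, ?_, hJ0, ?_, ?_⟩, hform⟩
  · exact strictMono_of_deriv_pos fun x => by rw [(hder x).deriv]; exact (hJ x).1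
  · refine StrictAnti.strictConcaveOn_univ_of_deriv
      (continuous_iff_continuousAt.mpr fun x => (hder x).continuousAt) ?_
    have : deriv (supConv u n) = J := funext fun x => (hder x).deriv
    rwa [this]
  · rw [hform, hJ0]
    refine Finset.sum_eq_zero fun i hi => ?_
    rw [hI1 i hi, (hu i hi).zero]
  · rw [Metric.tendsto_atTop]
    intro e he
    refine ⟨∑ i ∈ S, I i (e / 2), fun x hx => ?_⟩
    have h1 := hJanti.antitone hx
    rw [hJsurj _ (half_pos he)] at h1
    rw [Real.dist_eq, sub_zero, abs_of_pos (hJ x).1]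
    linarith
  · rw [tendsto_atTop]
    intro b
    filter_upwards [eventually_le_atBot (∑ i ∈ S, I i (max b 1))] with x hx
    have h1 := hJanti.antitone hx
    rw [hJsurj _ (lt_max_of_lt_right one_pos)] at h1
    exact (le_max_left _ _).trans h1
end
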